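/- (Uniform weak law of large numbers for strongly mixing arrays.) Let Π ≠ ∅ be an arbitrary index set. For every π ∈ Π let (Ω_π,𝓕_π,P_π) be a probability space and ξ_{1,π}, ξ_{2,π}, … a sequence of real random variables on it which are identically distributed and strongly mixing with mixing coefficients α_π(n). Assume: (i) lim_{K→∞} sup_{π∈Π} E_π[|ξ_{1,π}| 1_{|ξ_{1,π}|≥K}] = 0, and (ii) lim_{n→∞} sup_{π∈Π} α_π(n) = 0. Then for every δ > 0: lim_{n→∞} sup_{π∈Π} P_π[ |(1/n)∑_{i=1}^n ξ_{i,π} − E_π[ξ_{1,π}]| ≥ δ ] = 0. -/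

import Mathlib

open MeasureTheory Filter Topology

/-- The `n`-th strong mixing (α-mixing) coefficient of a sequence `ξ` under `P`. -/
noncomputable def mixingCoef {Ω E : Type*} [MeasurableSpace Ω] [MeasurableSpace E]
    (P : Measure Ω) (ξ : ℕ → Ω → E) (n : ℕ) : ℝ :=
  sSup {r : ℝ | ∃ k : ℕ, ∃ A B : Set Ω,
    MeasurableSet[⨆ i ∈ Set.Iic k, MeasurableSpace.comap (ξ i) inferInstance] A ∧
    MeasurableSet[⨆ i ∈ Set.Ici (k + n), MeasurableSpace.comap (ξ i) inferInstance] B ∧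
    r = |(P (A ∩ B)).toReal - (P A).toReal * (P B).toReal|}

/-!
Replace each `ξ i` by its truncation at level `K`. By uniform integrability this changes the sample
mean by little in `L¹`, uniformly in everything. The truncated variables are bounded, so the
covariance of two of them at distance at least `m` is at most `4 K²` times the mixing coefficient,
while only a proportion `2 m / n` of the pairs of indices are closer than `m`. Hence the variance of
the truncated sample mean is at most `2 m K² / n + 4 K² α(m)`. Fixing first `K`, then `m`, and
letting `n → ∞` gives uniform convergence in `L¹`, from which Markov's inequality yields the claim.
-/

open ProbabilityTheory

section Markov

lemma measure_le_abs_le_ofReal {Ω : Type*} [MeasurableSpace Ω] {μ : Measure Ω} {f : Ω → ℝ}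
    (hf : Integrable f μ) {δ : ℝ} (hδ : 0 < δ) :
    μ {ω | δ ≤ |f ω|} ≤ ENNReal.ofReal ((∫ ω, |f ω| ∂μ) / δ) := by
  have hset : {ω | δ ≤ |f ω|} = {ω | ENNReal.ofReal δ ≤ ENNReal.ofReal |f ω|} := by
    simp [ENNReal.ofReal_le_ofReal_iff]
  rw [hset, ENNReal.ofReal_div_of_pos hδ,
    ofReal_integral_eq_lintegral_ofReal hf.abs (Eventually.of_forall fun _ ↦ abs_nonneg _)]
  exact meas_ge_le_lintegral_div hf.abs.aemeasurable.ennreal_ofReal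
    (ENNReal.ofReal_pos.2 hδ).ne' ENNReal.ofReal_ne_top

lemma tendsto_iSup_measure_le_abs_of_tendstoUniformly {ι κ : Type*} {l : Filter κ} {Ω : ι → Type*}
    [∀ π, MeasurableSpace (Ω π)] {μ : ∀ π, Measure (Ω π)} {f : κ → ∀ π, Ω π → ℝ}
    (hf : ∀ n π, Integrable (f n π) (μ π))
    (hlim : TendstoUniformly (fun n π ↦ ∫ ω, |f n π ω| ∂μ π) 0 l) {δ : ℝ} (hδ : 0 < δ) :
    Tendsto (fun n ↦ ⨆ π, μ π {ω | δ ≤ |f n π ω|}) l (𝓝 0) := by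
  refine ENNReal.tendsto_nhds_zero.2 fun ε hε ↦ ?_
  obtain ⟨r, hr, hrε⟩ := ENNReal.lt_iff_exists_nnreal_btwn.1 hε
  have hrδ : 0 < (r : ℝ) * δ := mul_pos (by exact_mod_cast hr) hδ
  filter_upwards [Metric.tendstoUniformly_iff.1 hlim _ hrδ] with n hn
  refine iSup_le fun π ↦ (measure_le_abs_le_ofReal (hf n π) hδ).trans (le_trans ?_ hrε.le)
  have hnπ : ∫ ω, |f n π ω| ∂μ π ≤ r * δ :=
    (le_abs_self _).trans (by simpa [Real.dist_eq] using (hn π).le)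
  exact ENNReal.ofReal_le_of_le_toReal (by simpa using (div_le_iff₀ hδ).2 hnπ)

end Markov

/-- The strong mixing coefficient `α(𝒜, ℬ) = sup |P (A ∩ B) - P A * P B|` of two σ-algebras, where
`A` ranges over `𝒜` and `B` over `ℬ`. It measures the dependence of two random variables through
the σ-algebras they generate. -/
noncomputable def alphaCoef {Ω : Type*} {_ : MeasurableSpace Ω} (P : Measure Ω)
    (𝒜 ℬ : MeasurableSpace Ω) : ℝ :=
  sSup {r : ℝ | ∃ A B : Set Ω, MeasurableSet[𝒜] A ∧ MeasurableSet[ℬ] B ∧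
    r = |P.real (A ∩ B) - P.real A * P.real B|}

section CovarianceInequality

variable {Ω : Type*} {𝒜 ℬ m0 : MeasurableSpace Ω} {P : Measure Ω} {X Y Z : Ω → ℝ} {C D a : ℝ}

lemma integral_abs_condExp_le_of_forall_abs_setIntegral_le [IsFiniteMeasure P] (h𝒜 : 𝒜 ≤ m0)
    (hZ : Integrable Z P) (h : ∀ A, MeasurableSet[𝒜] A → |∫ ω in A, Z ω ∂P| ≤ a) :
    ∫ ω, |P[Z|𝒜] ω| ∂P ≤ 2 * a := by
  have hmeas : StronglyMeasurable[𝒜] (P[Z|𝒜]) := stronglyMeasurable_condExp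
  have hpos : MeasurableSet[𝒜] {ω | 0 ≤ P[Z|𝒜] ω} := stronglyMeasurable_const.measurableSet_le hmeas
  have hneg : MeasurableSet[𝒜] {ω | P[Z|𝒜] ω ≤ 0} := hmeas.measurableSet_le stronglyMeasurable_const
  calc ∫ ω, |P[Z|𝒜] ω| ∂P
      = ∫ ω in {ω | 0 ≤ P[Z|𝒜] ω}, P[Z|𝒜] ω ∂P - ∫ ω in {ω | P[Z|𝒜] ω ≤ 0}, P[Z|𝒜] ω ∂P :=
        integral_norm_eq_pos_sub_neg integrable_condExp
    _ = ∫ ω in {ω | 0 ≤ P[Z|𝒜] ω}, Z ω ∂P - ∫ ω in {ω | P[Z|𝒜] ω ≤ 0}, Z ω ∂P := by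
        rw [setIntegral_condExp h𝒜 hZ hpos, setIntegral_condExp h𝒜 hZ hneg]
    _ ≤ 2 * a := by linarith [(abs_le.1 (h _ hpos)).2, (abs_le.1 (h _ hneg)).1]

lemma abs_integral_mul_le_of_forall_abs_setIntegral_le [IsFiniteMeasure P] (h𝒜 : 𝒜 ≤ m0)
    (hX : StronglyMeasurable[𝒜] X) (hC : 0 ≤ C) (hXC : ∀ᵐ ω ∂P, |X ω| ≤ C) (hZ : Integrable Z P)
    (h : ∀ A, MeasurableSet[𝒜] A → |∫ ω in A, Z ω ∂P| ≤ a) :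
    |∫ ω, X ω * Z ω ∂P| ≤ C * (2 * a) := by
  have hXZ : Integrable (X * Z) P := hZ.bdd_mul (hX.mono h𝒜).aestronglyMeasurable hXC
  have hcond : ∫ ω, X ω * P[Z|𝒜] ω ∂P = ∫ ω, X ω * Z ω ∂P :=
    (integral_congr_ae (condExp_mul_of_stronglyMeasurable_left hX hXZ hZ)).symm.trans
      (integral_condExp h𝒜)
  calc |∫ ω, X ω * Z ω ∂P|
      = |∫ ω, X ω * P[Z|𝒜] ω ∂P| := by rw [hcond]
    _ ≤ ∫ ω, C * |P[Z|𝒜] ω| ∂P := by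
        rw [← Real.norm_eq_abs]
        refine norm_integral_le_of_norm_le (integrable_condExp.abs.const_mul C) ?_
        filter_upwards [hXC] with ω hω
        rw [Real.norm_eq_abs, abs_mul]
        gcongr
    _ ≤ C * (2 * a) := by
        rw [integral_const_mul]
        gcongr
        exact integral_abs_condExp_le_of_forall_abs_setIntegral_le h𝒜 hZ h

lemma memLp_indicator_one [IsFiniteMeasure P] {p : ENNReal} {A : Set Ω} (hA : MeasurableSet A) :
    MemLp (A.indicator (1 : Ω → ℝ)) p P :=
  memLp_indicator_const p hA 1 (Or.inr (measure_ne_top _ _))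

variable [IsProbabilityMeasure P]

lemma covariance_eq_integral_mul_sub (hX : MemLp X 2 P) (hY : MemLp Y 2 P) :
    cov[X, Y; P] = ∫ ω, X ω * (Y ω - P[Y]) ∂P := by
  have hXY : Integrable (fun ω ↦ X ω * Y ω) P := hX.integrable_mul hY
  simp_rw [covariance_eq_sub hX hY, mul_sub]
  rw [integral_sub hXY ((hX.integrable one_le_two).mul_const _), integral_mul_const]
  rfl

lemma covariance_indicator_one_left {A : Set Ω} (hA : MeasurableSet A) (hY : MemLp Y 2 P) :
    cov[A.indicator 1, Y; P] = ∫ ω in A, (Y ω - P[Y]) ∂P := by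
  rw [covariance_eq_integral_mul_sub (memLp_indicator_one hA) hY,
    ← integral_indicator hA]
  refine integral_congr_ae (Eventually.of_forall fun ω ↦ ?_)
  by_cases hω : ω ∈ A <;> simp [hω]

lemma covariance_indicator_one_indicator_one {A B : Set Ω} (hA : MeasurableSet A)
    (hB : MeasurableSet B) :
    cov[A.indicator 1, B.indicator 1; P] = P.real (A ∩ B) - P.real A * P.real B := by
  have hmul : A.indicator (1 : Ω → ℝ) * B.indicator 1 = (A ∩ B).indicator 1 :=
    Set.inter_indicator_one.symm
  rw [covariance_eq_sub (memLp_indicator_one hA) (memLp_indicator_one hB), hmul,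
    integral_indicator_one (hA.inter hB), integral_indicator_one hA, integral_indicator_one hB]

lemma abs_covariance_le_of_forall_abs_covariance_indicator_le (h𝒜 : 𝒜 ≤ m0)
    (hX : Measurable[𝒜] X) (hXC : ∀ᵐ ω ∂P, |X ω| ≤ C) (hY : MemLp Y 2 P)
    (h : ∀ A, MeasurableSet[𝒜] A → |cov[A.indicator 1, Y; P]| ≤ a) :
    |cov[X, Y; P]| ≤ C * (2 * a) := by
  obtain ⟨ω₀, hω₀⟩ := hXC.exists
  rw [covariance_eq_integral_mul_sub
    (MemLp.of_bound (hX.mono h𝒜 le_rfl).aestronglyMeasurable C hXC) hY]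
  refine abs_integral_mul_le_of_forall_abs_setIntegral_le h𝒜 hX.stronglyMeasurable
    ((abs_nonneg _).trans hω₀) hXC ((hY.integrable one_le_two).sub (integrable_const _))
    fun A hA ↦ ?_
  rw [← covariance_indicator_one_left (h𝒜 A hA) hY]
  exact h A hA

lemma abs_measureReal_inter_sub_mul_le_one (A B : Set Ω) :
    |P.real (A ∩ B) - P.real A * P.real B| ≤ 1 :=
  abs_sub_le_of_nonneg_of_le measureReal_nonneg measureReal_le_one
    (mul_nonneg measureReal_nonneg measureReal_nonneg)
    (mul_le_one₀ measureReal_le_one measureReal_nonneg measureReal_le_one)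

lemma abs_measureReal_inter_sub_mul_le_alphaCoef {A B : Set Ω} (hA : MeasurableSet[𝒜] A)
    (hB : MeasurableSet[ℬ] B) :
    |P.real (A ∩ B) - P.real A * P.real B| ≤ alphaCoef P 𝒜 ℬ := by
  refine le_csSup ⟨1, ?_⟩ ⟨A, B, hA, hB, rfl⟩
  rintro _ ⟨A, B, -, -, rfl⟩
  exact abs_measureReal_inter_sub_mul_le_one A B

theorem abs_covariance_le_mul_alphaCoef (h𝒜 : 𝒜 ≤ m0) (hℬ : ℬ ≤ m0)
    (hX : Measurable[𝒜] X) (hXC : ∀ᵐ ω ∂P, |X ω| ≤ C)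
    (hY : Measurable[ℬ] Y) (hYD : ∀ᵐ ω ∂P, |Y ω| ≤ D) :
    |cov[X, Y; P]| ≤ 4 * C * D * alphaCoef P 𝒜 ℬ := by
  have hY2 : MemLp Y 2 P := MemLp.of_bound (hY.mono hℬ le_rfl).aestronglyMeasurable D hYD
  have hind (A : Set Ω) (hA : MeasurableSet[𝒜] A) :
      |cov[A.indicator 1, Y; P]| ≤ D * (2 * alphaCoef P 𝒜 ℬ) := by
    rw [covariance_comm]
    refine abs_covariance_le_of_forall_abs_covariance_indicator_le hℬ hY hYD
      (memLp_indicator_one (h𝒜 A hA)) fun B hB ↦ ?_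
    rw [covariance_comm, covariance_indicator_one_indicator_one (h𝒜 A hA) (hℬ B hB)]
    exact abs_measureReal_inter_sub_mul_le_alphaCoef hA hB
  calc |cov[X, Y; P]| ≤ C * (2 * (D * (2 * alphaCoef P 𝒜 ℬ))) :=
        abs_covariance_le_of_forall_abs_covariance_indicator_le h𝒜 hX hXC hY2 hind
    _ = 4 * C * D * alphaCoef P 𝒜 ℬ := by ring

lemma alphaCoef_comap_le_mixingCoef {E : Type*} [MeasurableSpace E] {ξ : ℕ → Ω → E} {i j n : ℕ}
    (hij : i + n ≤ j) :
    alphaCoef P (MeasurableSpace.comap (ξ i) inferInstance)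
      (MeasurableSpace.comap (ξ j) inferInstance) ≤ mixingCoef P ξ n := by
  refine csSup_le ⟨_, ∅, ∅, MeasurableSpace.measurableSet_empty _,
    MeasurableSpace.measurableSet_empty _, rfl⟩ ?_
  rintro _ ⟨A, B, hA, hB, rfl⟩
  refine le_csSup ⟨1, ?_⟩ ⟨i, A, B, ?_, ?_, rfl⟩
  · rintro _ ⟨-, A, B, -, -, rfl⟩
    exact abs_measureReal_inter_sub_mul_le_one A B
  · exact le_iSup₂ (f := fun k (_ : k ∈ Set.Iic i) ↦ MeasurableSpace.comap (ξ k) inferInstance)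
      i Set.self_mem_Iic A hA
  · exact le_iSup₂ (f := fun k (_ : k ∈ Set.Ici (i + n)) ↦
      MeasurableSpace.comap (ξ k) inferInstance) j hij B hB

end CovarianceInequality

section SampleMean

variable {Ω : Type*} {X Y : ℕ → Ω → ℝ} {a c v τ : ℝ} {m n : ℕ}

/-- The sample mean `(X 0 + ⋯ + X (n - 1)) / n`, with the value `0` at `n = 0`. -/
noncomputable def sampleMean (X : ℕ → Ω → ℝ) (n : ℕ) (ω : Ω) : ℝ :=
  (n : ℝ)⁻¹ * ∑ i ∈ Finset.range n, X i ω

lemma sampleMean_sub (ω : Ω) :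
    sampleMean (fun i ↦ X i - Y i) n ω = sampleMean X n ω - sampleMean Y n ω := by
  simp [sampleMean, Finset.sum_sub_distrib, mul_sub]

variable [MeasurableSpace Ω] {P : Measure Ω}

lemma memLp_sampleMean {p : ENNReal} (hX : ∀ i, MemLp (X i) p P) : MemLp (sampleMean X n) p P :=
  (memLp_finsetSum _ fun i _ ↦ hX i).const_mul _

lemma integrable_sampleMean (hX : ∀ i, Integrable (X i) P) : Integrable (sampleMean X n) P :=
  (integrable_finsetSum _ fun i _ ↦ hX i).const_mul _

lemma integral_sampleMean (hX : ∀ i, Integrable (X i) P) (hc : ∀ i, ∫ ω, X i ω ∂P = c)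
    (hn : n ≠ 0) : ∫ ω, sampleMean X n ω ∂P = c := by
  simp only [sampleMean]
  rw [integral_const_mul, integral_finsetSum _ fun i _ ↦ hX i]
  simp [hc, hn]

lemma integral_abs_sampleMean_le (hX : ∀ i, Integrable (X i) P) (hτ : ∀ i, ∫ ω, |X i ω| ∂P ≤ τ) :
    ∫ ω, |sampleMean X n ω| ∂P ≤ τ := by
  have hτ0 : 0 ≤ τ := (integral_nonneg fun _ ↦ abs_nonneg _).trans (hτ 0)
  have hpoint (ω : Ω) : |sampleMean X n ω| ≤ (n : ℝ)⁻¹ * ∑ i ∈ Finset.range n, |X i ω| := by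
    rw [sampleMean, abs_mul, abs_of_nonneg (by positivity : (0 : ℝ) ≤ (n : ℝ)⁻¹)]
    gcongr
    exact Finset.abs_sum_le_sum_abs _ _
  calc ∫ ω, |sampleMean X n ω| ∂P
      ≤ ∫ ω, (n : ℝ)⁻¹ * ∑ i ∈ Finset.range n, |X i ω| ∂P :=
        integral_mono (integrable_sampleMean hX).abs
          ((integrable_finsetSum _ fun i _ ↦ (hX i).abs).const_mul _) hpoint
    _ = (n : ℝ)⁻¹ * ∑ i ∈ Finset.range n, ∫ ω, |X i ω| ∂P := by
        rw [integral_const_mul, integral_finsetSum _ fun i _ ↦ (hX i).abs]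
    _ ≤ (n : ℝ)⁻¹ * ∑ _i ∈ Finset.range n, τ := by gcongr; exact hτ _
    _ ≤ τ := by
        rw [Finset.sum_const, Finset.card_range, nsmul_eq_mul, ← mul_assoc]
        exact mul_le_of_le_one_left hτ0 (inv_mul_le_one)

lemma covariance_le_of_variance_le [IsFiniteMeasure P] {U V : Ω → ℝ} (hU : MemLp U 2 P)
    (hV : MemLp V 2 P) (hUv : Var[U; P] ≤ v) (hVv : Var[V; P] ≤ v) : cov[U, V; P] ≤ v := by
  linarith [variance_sub hU hV, variance_nonneg (U - V) P]

lemma card_filter_lt_add_and_lt_add_le (s : Finset ℕ) (i m : ℕ) :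
    (s.filter fun j ↦ i < j + m ∧ j < i + m).card ≤ 2 * m := by
  have hsub : (s.filter fun j ↦ i < j + m ∧ j < i + m) ⊆ Finset.Ico (i - m) (i + m) := by
    intro j hj
    simp only [Finset.mem_filter, Finset.mem_Ico] at hj ⊢
    omega
  have hcard := Finset.card_le_card hsub
  rw [Nat.card_Ico] at hcard
  omega

lemma sum_range_covariance_le [IsFiniteMeasure P] (hX : ∀ i, MemLp (X i) 2 P)
    (hv : ∀ i, Var[X i; P] ≤ v) (ha : 0 ≤ a) (hcov : ∀ i j, i + m ≤ j → cov[X i, X j; P] ≤ a)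
    (i n : ℕ) : ∑ j ∈ Finset.range n, cov[X i, X j; P] ≤ 2 * m * v + n * a := by
  have hv0 : 0 ≤ v := (variance_nonneg (X 0) P).trans (hv 0)
  have hterm (j : ℕ) : cov[X i, X j; P] ≤ (if i < j + m ∧ j < i + m then v else 0) + a := by
    split_ifs with hnear
    · linarith [covariance_le_of_variance_le (hX i) (hX j) (hv i) (hv j)]
    · rcases (by omega : i + m ≤ j ∨ j + m ≤ i) with hij | hji
      · linarith [hcov i j hij]
      · linarith [hcov j i hji, covariance_comm (X i) (X j) (μ := P)]
  refine (Finset.sum_le_sum fun j _ ↦ hterm j).trans ?_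
  rw [Finset.sum_add_distrib, ← Finset.sum_filter, Finset.sum_const, Finset.sum_const,
    Finset.card_range, nsmul_eq_mul, nsmul_eq_mul]
  gcongr
  exact_mod_cast card_filter_lt_add_and_lt_add_le (Finset.range n) i m

lemma variance_sampleMean_le [IsFiniteMeasure P] (hX : ∀ i, MemLp (X i) 2 P)
    (hv : ∀ i, Var[X i; P] ≤ v) (ha : 0 ≤ a) (hcov : ∀ i j, i + m ≤ j → cov[X i, X j; P] ≤ a)
    (n : ℕ) : Var[sampleMean X n; P] ≤ 2 * m * v / n + a := by
  calc Var[sampleMean X n; P]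
      = (n : ℝ)⁻¹ ^ 2 * ∑ i ∈ Finset.range n, ∑ j ∈ Finset.range n, cov[X i, X j; P] := by
        rw [← variance_fun_sum' fun i _ ↦ hX i, ← variance_const_mul]
        rfl
    _ ≤ (n : ℝ)⁻¹ ^ 2 * ∑ i ∈ Finset.range n, (2 * m * v + n * a) := by
        gcongr with i
        exact sum_range_covariance_le hX hv ha hcov i n
    _ ≤ 2 * m * v / n + a := by
        rcases eq_or_ne n 0 with rfl | hn
        · simpa using ha
        · rw [Finset.sum_const, Finset.card_range, nsmul_eq_mul]
          apply le_of_eq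
          field_simp

end SampleMean

section Truncation

variable {Ω : Type*}

lemma abs_sub_truncation_le_indicator (f : Ω → ℝ) (K : ℝ) (ω : Ω) :
    |f ω - truncation f K ω| ≤ {ω' | K ≤ |f ω'|}.indicator (fun ω' ↦ |f ω'|) ω := by
  by_cases hω : K ≤ |f ω|
  · rw [Set.indicator_of_mem (by exact hω)]
    simp only [truncation, Function.comp_apply, Set.indicator_apply]
    split_ifs <;> simp
  · rw [truncation_eq_self (not_le.1 hω), sub_self, abs_zero]
    exact Set.indicator_nonneg (fun _ _ ↦ abs_nonneg _) ω

lemma measurable_comap_truncation (f : Ω → ℝ) (K : ℝ) :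
    Measurable[MeasurableSpace.comap f inferInstance] (truncation f K) :=
  (measurable_id.indicator measurableSet_Ioc).comp (comap_measurable f)

variable [MeasurableSpace Ω] {P : Measure Ω} {X Y : Ω → ℝ} {K : ℝ}

lemma integral_abs_sub_truncation_le (hX : Measurable X) (hint : Integrable X P) :
    ∫ ω, |X ω - truncation X K ω| ∂P
      ≤ ∫ ω, {ω' | K ≤ |X ω'|}.indicator (fun ω' ↦ |X ω'|) ω ∂P :=
  integral_mono_of_nonneg (Eventually.of_forall fun _ ↦ abs_nonneg _)
    (hint.abs.indicator (measurableSet_le measurable_const hX.abs))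
    (Eventually.of_forall (abs_sub_truncation_le_indicator X K))

variable [IsProbabilityMeasure P]

lemma variance_truncation_le_sq (hX : AEStronglyMeasurable X P) (K : ℝ) :
    Var[truncation X K; P] ≤ K ^ 2 := by
  calc Var[truncation X K; P] ≤ ∫ ω, truncation X K ω ^ 2 ∂P :=
        variance_le_expectation_sq hX.truncation
    _ ≤ ∫ _, K ^ 2 ∂P :=
        integral_mono hX.memLp_truncation.integrable_sq (integrable_const _) fun ω ↦
          sq_le_sq.2 (abs_truncation_le_bound X K ω)
    _ = K ^ 2 := by simp

lemma integral_abs_sub_integral_le_sqrt_variance (hX : MemLp X 2 P) :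
    ∫ ω, |X ω - P[X]| ∂P ≤ √(Var[X; P]) := by
  have hdev : MemLp (fun ω ↦ |X ω - P[X]|) 2 P := (hX.sub (memLp_const _)).abs
  have hvar := variance_nonneg (fun ω ↦ |X ω - P[X]|) P
  rw [variance_eq_sub hdev] at hvar
  refine Real.le_sqrt_of_sq_le ?_
  rw [variance_eq_integral hX.aemeasurable]
  simpa using hvar

lemma integral_abs_sub_integral_le (hX : Integrable X P) (hY : MemLp Y 2 P) :
    ∫ ω, |X ω - P[X]| ∂P ≤ √(Var[Y; P]) + 2 * ∫ ω, |X ω - Y ω| ∂P := by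
  have hY1 : Integrable Y P := hY.integrable one_le_two
  have hYdev : Integrable (fun ω ↦ |Y ω - P[Y]|) P := (hY1.sub (integrable_const _)).abs
  have hXY : Integrable (fun ω ↦ |X ω - Y ω|) P := (hX.sub hY1).abs
  have hsum : Integrable (fun ω ↦ |Y ω - P[Y]| + |X ω - Y ω|) P := hYdev.add hXY
  have hmean : |P[Y] - P[X]| ≤ ∫ ω, |X ω - Y ω| ∂P := by
    rw [abs_sub_comm, ← integral_sub hX hY1]
    exact abs_integral_le_integral_abs
  have hpoint (ω : Ω) :
      |X ω - P[X]| ≤ |Y ω - P[Y]| + |X ω - Y ω| + ∫ ω, |X ω - Y ω| ∂P := by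
    linarith [abs_sub_le (X ω) (Y ω) (P[X]), abs_sub_le (Y ω) (P[Y]) (P[X])]
  calc ∫ ω, |X ω - P[X]| ∂P
      ≤ ∫ ω, (|Y ω - P[Y]| + |X ω - Y ω| + ∫ ω, |X ω - Y ω| ∂P) ∂P :=
        integral_mono (hX.sub (integrable_const _)).abs
          (hsum.add (integrable_const _)) hpoint
    _ = ∫ ω, |Y ω - P[Y]| ∂P + 2 * ∫ ω, |X ω - Y ω| ∂P := by
        rw [integral_add hsum (integrable_const _), integral_add hYdev hXY]
        simp only [integral_const, probReal_univ, one_smul]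
        ring
    _ ≤ √(Var[Y; P]) + 2 * ∫ ω, |X ω - Y ω| ∂P := by
        gcongr
        exact integral_abs_sub_integral_le_sqrt_variance hY

end Truncation

section WeakLaw

lemma variance_sampleMean_truncation_le {Ω : Type*} [MeasurableSpace Ω] {P : Measure Ω}
    [IsProbabilityMeasure P] {ξ : ℕ → Ω → ℝ} (hmeas : ∀ i, Measurable (ξ i)) {m : ℕ} {a : ℝ}
    (ha : 0 ≤ a) (hα : ∀ i j, i + m ≤ j →
      alphaCoef P (MeasurableSpace.comap (ξ i) inferInstance)
        (MeasurableSpace.comap (ξ j) inferInstance) ≤ a) (K : ℝ) (n : ℕ) :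
    Var[sampleMean (fun i ↦ truncation (ξ i) K) n; P] ≤ 2 * m * K ^ 2 / n + 4 * K ^ 2 * a := by
  have hbound (i : ℕ) : ∀ᵐ ω ∂P, |truncation (ξ i) K ω| ≤ |K| :=
    Eventually.of_forall (abs_truncation_le_bound (ξ i) K)
  refine variance_sampleMean_le (fun i ↦ (hmeas i).aestronglyMeasurable.memLp_truncation)
    (fun i ↦ variance_truncation_le_sq (hmeas i).aestronglyMeasurable K) (by positivity)
    (fun i j hij ↦ ?_) n
  calc cov[truncation (ξ i) K, truncation (ξ j) K; P]
      ≤ 4 * |K| * |K| * alphaCoef P (MeasurableSpace.comap (ξ i) inferInstance)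
          (MeasurableSpace.comap (ξ j) inferInstance) :=
        (le_abs_self _).trans <| abs_covariance_le_mul_alphaCoef (hmeas i).comap_le
          (hmeas j).comap_le (measurable_comap_truncation _ K) (hbound i)
          (measurable_comap_truncation _ K) (hbound j)
    _ ≤ 4 * |K| * |K| * a := by gcongr; exact hα i j hij
    _ = 4 * K ^ 2 * a := by rw [mul_assoc 4, abs_mul_abs_self, sq]

lemma integral_abs_sampleMean_sub_integral_le {Ω : Type*} [MeasurableSpace Ω] {P : Measure Ω}
    [IsProbabilityMeasure P] {ξ : ℕ → Ω → ℝ} (hmeas : ∀ i, Measurable (ξ i))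
    (hint : ∀ i, Integrable (ξ i) P) {K τ : ℝ}
    (hτ : ∀ i, ∫ ω, {ω' | K ≤ |ξ i ω'|}.indicator (fun ω' ↦ |ξ i ω'|) ω ∂P ≤ τ) {m : ℕ} {a : ℝ}
    (ha : 0 ≤ a) (hα : ∀ i j, i + m ≤ j →
      alphaCoef P (MeasurableSpace.comap (ξ i) inferInstance)
        (MeasurableSpace.comap (ξ j) inferInstance) ≤ a) (n : ℕ) :
    ∫ ω, |sampleMean ξ n ω - P[sampleMean ξ n]| ∂P
      ≤ √(2 * m * K ^ 2 / n + 4 * K ^ 2 * a) + 2 * τ := by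
  have htrunc (i : ℕ) : MemLp (truncation (ξ i) K) 2 P :=
    (hmeas i).aestronglyMeasurable.memLp_truncation
  refine (integral_abs_sub_integral_le (integrable_sampleMean hint)
    (memLp_sampleMean htrunc (n := n))).trans ?_
  gcongr
  · exact variance_sampleMean_truncation_le hmeas ha hα K n
  · simp_rw [← sampleMean_sub]
    exact integral_abs_sampleMean_le (fun i ↦ (hint i).sub ((htrunc i).integrable one_le_two))
      fun i ↦ (integral_abs_sub_truncation_le (hmeas i) (hint i)).trans (hτ i)

variable {ι : Type*} {Ω : ι → Type*} [∀ π, MeasurableSpace (Ω π)] {P : ∀ π, Measure (Ω π)}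
  [∀ π, IsProbabilityMeasure (P π)] {ξ : ∀ π, ℕ → Ω π → ℝ}

theorem tendstoUniformly_integral_abs_sampleMean_sub_integral
    (hmeas : ∀ π i, Measurable (ξ π i)) (hint : ∀ π i, Integrable (ξ π i) (P π))
    (hUI : ∀ ε : ℝ, 0 < ε → ∃ K : ℝ, ∀ π i,
      ∫ ω, {ω' | K ≤ |ξ π i ω'|}.indicator (fun ω' ↦ |ξ π i ω'|) ω ∂P π ≤ ε)
    (hα : ∀ ε : ℝ, 0 < ε → ∃ m : ℕ, ∀ π i j, i + m ≤ j →
      alphaCoef (P π) (MeasurableSpace.comap (ξ π i) inferInstance)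
        (MeasurableSpace.comap (ξ π j) inferInstance) ≤ ε) :
    TendstoUniformly
      (fun n π ↦ ∫ ω, |sampleMean (ξ π) n ω - (P π)[sampleMean (ξ π) n]| ∂P π) 0 atTop := by
  refine Metric.tendstoUniformly_iff.2 fun ε hε ↦ ?_
  obtain ⟨K, hK⟩ := hUI (ε / 4) (by positivity)
  obtain ⟨a, ha, haK⟩ : ∃ a > 0, √(4 * K ^ 2 * a) < ε / 2 := by
    have hlim : Tendsto (fun a ↦ √(4 * K ^ 2 * a)) (𝓝[>] 0) (𝓝 0) :=
      tendsto_nhdsWithin_of_tendsto_nhds (Continuous.tendsto' (by fun_prop) _ _ (by simp))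
    exact (eventually_mem_nhdsWithin.and (hlim.eventually_lt_const (half_pos hε))).exists
  obtain ⟨m, hm⟩ := hα a ha
  have hlim : Tendsto (fun n : ℕ ↦ √(2 * m * K ^ 2 / n + 4 * K ^ 2 * a)) atTop
      (𝓝 √(4 * K ^ 2 * a)) := by
    simpa using ((tendsto_const_div_atTop_nhds_zero_nat (2 * m * K ^ 2)).add_const
      (4 * K ^ 2 * a)).sqrt
  filter_upwards [hlim.eventually_lt_const haK] with n hn π
  have hbound := integral_abs_sampleMean_sub_integral_le (hmeas π) (hint π) (hK π) ha.le (hm π) n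
  rw [Pi.zero_apply, dist_zero_left, Real.norm_of_nonneg (integral_nonneg fun _ ↦ abs_nonneg _)]
  linarith

theorem uniform_weak_lln_general
    (hmeas : ∀ π i, Measurable (ξ π i)) (hint : ∀ π i, Integrable (ξ π i) (P π))
    (hUI : ∀ ε : ℝ, 0 < ε → ∃ K : ℝ, ∀ π i,
      ∫ ω, {ω' | K ≤ |ξ π i ω'|}.indicator (fun ω' ↦ |ξ π i ω'|) ω ∂P π ≤ ε)
    (hα : ∀ ε : ℝ, 0 < ε → ∃ m : ℕ, ∀ π i j, i + m ≤ j →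
      alphaCoef (P π) (MeasurableSpace.comap (ξ π i) inferInstance)
        (MeasurableSpace.comap (ξ π j) inferInstance) ≤ ε) {c : ι → ℝ}
    (hc : ∀ π i, ∫ ω, ξ π i ω ∂P π = c π) {δ : ℝ} (hδ : 0 < δ) :
    Tendsto (fun n ↦ ⨆ π, P π {ω | δ ≤ |sampleMean (ξ π) n ω - c π|}) atTop (𝓝 0) := by
  refine (tendsto_iSup_measure_le_abs_of_tendstoUniformly
    (fun n π ↦ (integrable_sampleMean (hint π)).sub (integrable_const _))
    (tendstoUniformly_integral_abs_sampleMean_sub_integral hmeas hint hUI hα) hδ).congr' ?_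
  filter_upwards [eventually_ne_atTop 0] with n hn
  simp only [Pi.sub_apply, integral_sampleMean (hint _) (hc _) hn]

end WeakLaw

/-- **Uniform weak law of large numbers for strongly mixing arrays** (Corollary A.2):
for a family, indexed by a nonempty set `ι`, of identically distributed strongly mixing
sequences with uniformly integrable first marginals and uniformly decaying mixing
coefficients, the sample means converge to the expectations in probability, uniformly
over the index set. -/
theorem uniform_weak_lln
    {ι : Type*} [Nonempty ι]
    (Ω : ι → Type*) [mΩ : ∀ π, MeasurableSpace (Ω π)]
    (P : ∀ π, Measure (Ω π)) (hprob : ∀ π, IsProbabilityMeasure (P π))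
    (ξ : ∀ π, ℕ → Ω π → ℝ)
    (hmeas : ∀ π i, Measurable (ξ π i))
    (hint : ∀ π, Integrable (ξ π 0) (P π))
    (hident : ∀ π i, (P π).map (ξ π i) = (P π).map (ξ π 0))
    -- each sequence is strongly mixing
    (hmix : ∀ π, Tendsto (fun n => mixingCoef (P π) (ξ π) n) atTop (nhds 0))
    -- (i) uniform integrability
    (hi : ∀ ε : ℝ, 0 < ε → ∃ K₀ : ℝ, ∀ K ≥ K₀, ∀ π,
      ∫ ω, Set.indicator {ω' : Ω π | K ≤ |ξ π 0 ω'|} (fun ω' => |ξ π 0 ω'|) ω ∂(P π) ≤ ε)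
    -- (ii) uniformly decaying mixing coefficients
    (hii : ∀ ε : ℝ, 0 < ε → ∃ n₀ : ℕ, ∀ n ≥ n₀, ∀ π, mixingCoef (P π) (ξ π) n ≤ ε) :
    ∀ δ : ℝ, 0 < δ →
      Tendsto (fun n : ℕ => ⨆ π,
          P π {ω : Ω π | δ ≤
              |(n : ℝ)⁻¹ * ∑ i ∈ Finset.range n, ξ π i ω - ∫ ω', ξ π 0 ω' ∂(P π)|})
        atTop (nhds 0) := by
  intro δ hδ
  have hid (π) (i : ℕ) : IdentDistrib (ξ π i) (ξ π 0) (P π) (P π) :=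
    ⟨(hmeas π i).aemeasurable, (hmeas π 0).aemeasurable, hident π i⟩
  have htail (K : ℝ) : Measurable ({x : ℝ | K ≤ |x|}.indicator fun x ↦ |x|) :=
    measurable_id.abs.indicator (measurableSet_le measurable_const measurable_id.abs)
  exact uniform_weak_lln_general hmeas (fun π i ↦ (hid π i).integrable_iff.2 (hint π))
    (fun ε hε ↦ (hi ε hε).imp fun K hK π i ↦
      ((hid π i).comp (htail K)).integral_eq.trans_le (hK K le_rfl π))
    (fun ε hε ↦ (hii ε hε).imp fun m hm π i j hij ↦
      (alphaCoef_comap_le_mixingCoef hij).trans (hm m le_rfl π))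
    (fun π i ↦ (hid π i).integral_eq) hδ
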